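/- Let k be a field, C a small category, and M : C → Vec_k a pointwise finite-dimensional indecomposable persistence module. Then the endomorphism ring End(M) is local: for every endomorphism θ of M, either θ is an isomorphism or 1 − θ is an isomorphism. -/

import Mathlib

namespace PModCat

open CategoryTheory

variable (k : Type) [Field k]

/-- A persistence module over a small category `C`: a functor from `C` to
`k`-vector spaces, given explicitly. -/
structure PersistenceModule (C : Type) [Category C] where
  V : C → Type
  [addCommGroup : ∀ x, AddCommGroup (V x)]
  [module : ∀ x, Module k (V x)]
  map : ∀ {x y : C}, (x ⟶ y) → (V x →ₗ[k] V y)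
  map_id : ∀ x : C, map (𝟙 x) = LinearMap.id
  map_comp : ∀ {x y z : C} (f : x ⟶ y) (g : y ⟶ z),
      map (f ≫ g) = (map g).comp (map f)

attribute [instance] PersistenceModule.addCommGroup PersistenceModule.module

variable {k}

/-- A morphism of persistence modules (a natural transformation). -/
structure Hom {C : Type} [Category C] (M N : PersistenceModule k C) where
  app : ∀ x, M.V x →ₗ[k] N.V x
  natural : ∀ {x y : C} (f : x ⟶ y), (N.map f).comp (app x) = (app y).comp (M.map f)

/-- A morphism of persistence modules is an isomorphism iff it is pointwise bijective. -/
def IsIsoHom {C : Type} [Category C] {M N : PersistenceModule k C} (f : Hom M N) : Prop :=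
  ∀ x, Function.Bijective (f.app x)

/-- Two persistence modules are isomorphic if there is a pointwise bijective
morphism between them. -/
def Isomorphic {C : Type} [Category C] (M N : PersistenceModule k C) : Prop :=
  ∃ f : Hom M N, IsIsoHom f

/-- The endomorphism `1 - θ` of `M`, for an endomorphism `θ` of `M`. -/
def oneSub {C : Type} [Category C] {M : PersistenceModule k C} (θ : Hom M M) : Hom M M where
  app x := LinearMap.id - θ.app x
  natural {x y} f := by
    rw [LinearMap.comp_sub, LinearMap.sub_comp, θ.natural f, LinearMap.comp_id,
      LinearMap.id_comp]

/-- The direct sum of a family of persistence modules, taken pointwise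
(`Π₀` is the finitely supported product, i.e. the direct sum). -/
noncomputable def directSum {C : Type} [Category C] {ι : Type}
    (N : ι → PersistenceModule k C) : PersistenceModule k C where
  V x := Π₀ i, (N i).V x
  map {x y} f := DFinsupp.mapRange.linearMap (fun i => (N i).map f)
  map_id x := by
    have h : (fun i => (N i).map (𝟙 x)) =
        fun i => (LinearMap.id : (N i).V x →ₗ[k] (N i).V x) :=
      funext fun i => (N i).map_id x
    rw [h]
    exact DFinsupp.mapRange.linearMap_id
  map_comp {x y z} f g := by
    have h : (fun i => (N i).map (f ≫ g)) =
        fun i => ((N i).map g).comp ((N i).map f) :=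
      funext fun i => (N i).map_comp f g
    rw [h]
    exact DFinsupp.mapRange.linearMap_comp _ _

/-- The binary direct sum of two persistence modules, taken pointwise. -/
def sum2 {C : Type} [Category C] (M N : PersistenceModule k C) : PersistenceModule k C where
  V x := M.V x × N.V x
  map f := (M.map f).prodMap (N.map f)
  map_id x := by
    rw [M.map_id, N.map_id]
    exact LinearMap.prodMap_id
  map_comp f g := by
    rw [M.map_comp f g, N.map_comp f g]
    exact (LinearMap.prodMap_comp _ _ _ _).symm

/-- The zero persistence module predicate. -/
def IsZero {C : Type} [Category C] (M : PersistenceModule k C) : Prop :=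
  ∀ x, ∀ v : M.V x, v = 0

/-- A persistence module is indecomposable if it is nonzero and whenever it is
isomorphic to a direct sum of two modules, one of the summands is zero. -/
def Indecomposable {C : Type} [Category C] (M : PersistenceModule k C) : Prop :=
  ¬ IsZero M ∧ ∀ M' M'' : PersistenceModule k C,
    Isomorphic M (sum2 M' M'') → IsZero M' ∨ IsZero M''

end PModCat

namespace PModCat

open CategoryTheory

/-- The submodule of a persistence module cut out by a stable family of subspaces. -/
def subMod {k : Type} [Field k] {C : Type} [SmallCategory C] (M : PersistenceModule k C)
    (K : ∀ x, Submodule k (M.V x))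
    (hK : ∀ {x y : C} (f : x ⟶ y), ∀ v ∈ K x, M.map f v ∈ K y) : PersistenceModule k C where
  V x := K x
  map f := (M.map f).restrict (hK f)
  map_id x := by
    ext v
    simp [M.map_id]
  map_comp f g := by
    ext v
    simp [M.map_comp]

theorem bot_or_bot {k : Type} [Field k] {C : Type} [SmallCategory C] (M : PersistenceModule k C)
    (hind : Indecomposable M) (K R : ∀ x, Submodule k (M.V x))
    (hK : ∀ {x y : C} (f : x ⟶ y), ∀ v ∈ K x, M.map f v ∈ K y)
    (hR : ∀ {x y : C} (f : x ⟶ y), ∀ v ∈ R x, M.map f v ∈ R y)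
    (hc : ∀ x, IsCompl (K x) (R x)) : (∀ x, ∀ v ∈ K x, v = 0) ∨ (∀ x, ∀ v ∈ R x, v = 0) := by
  have key : Isomorphic M (sum2 (subMod M K hK) (subMod M R hR)) := by
    refine ⟨⟨fun x => ((Submodule.prodEquivOfIsCompl _ _ (hc x)).symm :
      M.V x →ₗ[k] (K x × R x)), ?_⟩, ?_⟩
    · intro x y f
      refine LinearMap.ext fun v => ?_
      obtain ⟨⟨a, b⟩, rfl⟩ := (Submodule.prodEquivOfIsCompl _ _ (hc x)).surjective v
      have h1 : (Submodule.prodEquivOfIsCompl _ _ (hc x)).symm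
          (Submodule.prodEquivOfIsCompl _ _ (hc x) (a, b)) = (a, b) :=
        LinearEquiv.symm_apply_apply _ _
      have h2 : (Submodule.prodEquivOfIsCompl _ _ (hc y)).symm
          (M.map f (Submodule.prodEquivOfIsCompl _ _ (hc x) (a, b))) =
          ((⟨M.map f a, hK f _ a.2⟩ : K y), (⟨M.map f b, hR f _ b.2⟩ : R y)) := by
        rw [LinearEquiv.symm_apply_eq]
        simp
      refine Eq.trans ?_ h2.symm
      exact congrArg ((sum2 (subMod M K hK) (subMod M R hR)).map f) h1
    · intro x
      exact (Submodule.prodEquivOfIsCompl _ _ (hc x)).symm.bijective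
  rcases hind.2 _ _ key with h | h
  · exact Or.inl fun x v hv => congrArg Subtype.val (h x (⟨v, hv⟩ : K x))
  · exact Or.inr fun x v hv => congrArg Subtype.val (h x (⟨v, hv⟩ : R x))

theorem pow_natural {k : Type} [Field k] {C : Type} [SmallCategory C] {M : PersistenceModule k C}
    (θ : Hom M M) {x y : C} (f : x ⟶ y) (n : ℕ) (v : M.V x) :
    M.map f ((θ.app x ^ n) v) = (θ.app y ^ n) (M.map f v) := by
  induction n generalizing v with
  | zero => rfl
  | succ n ih =>
    rw [pow_succ, pow_succ, Module.End.mul_apply, Module.End.mul_apply, ih]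
    exact congrArg _ (LinearMap.congr_fun (θ.natural f) v)

end PModCat

theorem stmt8 {k : Type} [Field k] {C : Type} [CategoryTheory.SmallCategory C]
    (M : PModCat.PersistenceModule k C)
    (hfd : ∀ x, FiniteDimensional k (M.V x))
    (hind : PModCat.Indecomposable M) :
    ∀ θ : PModCat.Hom M M, PModCat.IsIsoHom θ ∨ PModCat.IsIsoHom (PModCat.oneSub θ) := by
  intro θ
  have bij : ∀ (x : C) (g : M.V x →ₗ[k] M.V x), (∀ v, g v = 0 → v = 0) →
      Function.Bijective g := by
    intro x g h
    have := hfd x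
    have hi : Function.Injective g := (injective_iff_map_eq_zero g).2 h
    exact ⟨hi, LinearMap.injective_iff_surjective.1 hi⟩
  have memK : ∀ x v, v ∈ (⨆ n : ℕ, LinearMap.ker (θ.app x ^ n)) ↔
      ∃ n : ℕ, (θ.app x ^ n) v = 0 := by
    intro x v
    rw [Submodule.mem_iSup_of_directed]
    · rfl
    · refine Monotone.directed_le (monotone_nat_of_le_succ fun n w hw => ?_)
      rw [LinearMap.mem_ker] at hw ⊢
      rw [pow_succ', Module.End.mul_apply, hw, map_zero]
  have hK : ∀ (x y : C) (f : Quiver.Hom x y), ∀ v ∈ (⨆ n : ℕ, LinearMap.ker (θ.app x ^ n)),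
      M.map f v ∈ (⨆ n : ℕ, LinearMap.ker (θ.app y ^ n)) := by
    intro x y f v hv
    obtain ⟨n, hn⟩ := (memK x v).1 hv
    exact (memK y _).2 ⟨n, by rw [← PModCat.pow_natural, hn, map_zero]⟩
  have hR : ∀ (x y : C) (f : Quiver.Hom x y), ∀ v ∈ (⨅ n : ℕ, LinearMap.range (θ.app x ^ n)),
      M.map f v ∈ (⨅ n : ℕ, LinearMap.range (θ.app y ^ n)) := by
    intro x y f v hv
    refine (Submodule.mem_iInf _).2 fun n => ?_
    obtain ⟨w, hw⟩ := (Submodule.mem_iInf _).1 hv n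
    exact ⟨M.map f w, by rw [← PModCat.pow_natural, hw]⟩
  rcases PModCat.bot_or_bot M hind (fun x => ⨆ n : ℕ, LinearMap.ker (θ.app x ^ n))
    (fun x => ⨅ n : ℕ, LinearMap.range (θ.app x ^ n)) (fun {x y} f => hK x y f) (fun {x y} f => hR x y f)
    (fun x => by
      have := hfd x
      exact LinearMap.isCompl_iSup_ker_pow_iInf_range_pow (θ.app x)) with h | h
  · refine Or.inl fun x => bij x _ fun v hv => h x v ((memK x v).2 ⟨1, by simpa using hv⟩)
  · refine Or.inr fun x => bij x _ fun v hv => h x v ?_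
    have hv : θ.app x v = v := (sub_eq_zero.1 hv).symm
    refine (Submodule.mem_iInf _).2 fun n => ⟨v, ?_⟩
    induction n with
    | zero => rfl
    | succ n ih => rw [pow_succ, Module.End.mul_apply, hv, ih]
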